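/- Let M be a finitely generated left module over the Weyl algebra A = k⟨x_1,...,x_n,∂_1,...,∂_n⟩ (char k = 0). For each a ∈ Z^n, the simultaneous eigenspace M_a = {y ∈ M : (x_i ∂_i) y = a_i y for all i} is finite-dimensional over k. -/

import Mathlib

/-!
Let `A ⊆ End_k M` be the algebra generated by the operators `X i` and `D i`.

* `A` is left Noetherian. Adjoin the generators one at a time, first the `X i`, then the `D i`:
  each new generator `t` satisfies `[t, R] ⊆ R`, where `R` is the algebra generated by the previous
  ones, so Hilbert's basis argument applies (`isNoetherianRing_of_commutator`,
  `isNoetherianRing_adjoin_insert`). Hence the finitely generated `A`-module `M` is Noetherian.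
* For a subspace `V` of the weight space `M_a`, one has `(A V) ∩ M_a = V`
  (`exists_invariant_inf_le`): adding one index `i` at a time, `V` generates under `x = X i` and
  `d = D i` the sum of the subspaces `x ^ m V` and `d ^ m V`, which apart from `V` itself consist
  of eigenvectors of `x d` for eigenvalues other than `a i`, by characteristic zero.

Therefore `V ↦ A V` is a strictly increasing map from the subspaces of `M_a` to the `A`-submodules
of `M`, so the subspaces of `M_a` satisfy the ascending chain condition.
-/

/-- A pair of commuting families of operators `X i`, `D i` (`i ∈ [n]`) on a
`k`-vector space `M` satisfying the Weyl algebra relations `∂ᵢxᵢ - xᵢ∂ᵢ = 1`,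
all other pairs of generators commuting.  This is exactly the data of a left
module over the Weyl algebra `A = k⟨x_1, …, x_n, ∂_1, …, ∂_n⟩`. -/
def IsWeylAction {k : Type*} [Field k] {n : ℕ} {M : Type*} [AddCommGroup M]
    [Module k M] (X D : Fin n → Module.End k M) : Prop :=
  (∀ i, D i * X i - X i * D i = 1) ∧
  (∀ i j, i ≠ j → D i * X j = X j * D i) ∧
  (∀ i j, X i * X j = X j * X i) ∧
  (∀ i j, D i * D j = D j * D i)

/-- The left `A`-module `M` is finitely generated: there is a finite subset `s ⊆ M`
such that the only `X`- and `D`-invariant subspace containing `s` is `M` itself. -/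
def IsFGWeylModule {k : Type*} [Field k] {n : ℕ} {M : Type*} [AddCommGroup M]
    [Module k M] (X D : Fin n → Module.End k M) : Prop :=
  ∃ s : Finset M, ∀ N : Submodule k M, (↑s : Set M) ⊆ N →
    (∀ i : Fin n, ∀ m ∈ N, X i m ∈ N ∧ D i m ∈ N) → N = ⊤

/-- The simultaneous eigenspace `M_a = {y : (xᵢ∂ᵢ)y = aᵢy for all i}`. -/
noncomputable def weylWeightSpace {k : Type*} [Field k] {n : ℕ} {M : Type*}
    [AddCommGroup M] [Module k M] (X D : Fin n → Module.End k M)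
    (a : Fin n → ℤ) : Submodule k M :=
  ⨅ i : Fin n, Module.End.eigenspace (X i * D i) ((a i : ℤ) : k)

namespace WeylWeight

/-! ### Hilbert's basis theorem with commutators -/

section Hilbert

variable {R S : Type*} [Ring R] [Ring S] [Module R S]

/-- The elements `∑_{i < d} r_i t ^ i` of `S`. -/
def lower (R : Type*) {S : Type*} [Ring R] [Ring S] [Module R S] (t : S) (d : ℕ) :
    Submodule R S :=
  Submodule.span R ((fun i : ℕ => t ^ i) '' Set.Iio d)

theorem lower_mono (t : S) : Monotone (lower R t) := fun _ _ h =>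
  Submodule.span_mono (Set.image_mono (Set.Iio_subset_Iio h))

theorem pow_mem_lower (t : S) {i d : ℕ} (h : i < d) : t ^ i ∈ lower R t d :=
  Submodule.subset_span ⟨i, h, rfl⟩

theorem mem_lower_succ {t : S} {d : ℕ} {s : S} (h : s ∈ lower R t (d + 1)) :
    ∃ r : R, ∃ l ∈ lower R t d, s = r • t ^ d + l := by
  have e : Set.Iio (d + 1) = insert d (Set.Iio d) := by
    ext i; simp only [Set.mem_Iio, Set.mem_insert_iff]; omega
  rw [lower, e, Set.image_insert_eq, Submodule.mem_span_insert] at h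
  exact h

theorem mul_mem_lower {t : S} (hc : ∀ r : R, ∀ s : S, ∃ r' : R, t * (r • s) = r • (t * s) + r' • s)
    {d : ℕ} {l : S} (h : l ∈ lower R t d) : t * l ∈ lower R t (d + 1) := by
  induction h using Submodule.span_induction with
  | mem x hx =>
    obtain ⟨i, hi, rfl⟩ := hx
    simp only [Set.mem_Iio] at hi
    simp only [← pow_succ']
    exact pow_mem_lower t (by omega)
  | zero => simp
  | add x y _ _ hx hy => rw [mul_add]; exact add_mem hx hy
  | smul r x hx' hx =>
    obtain ⟨r', hr⟩ := hc r x
    rw [hr]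
    exact add_mem (Submodule.smul_mem _ _ hx)
      (Submodule.smul_mem _ _ (lower_mono t (Nat.le_succ d) hx'))

variable [IsScalarTower R S S]

/-- The left ideal of coefficients `r` such that some `r t ^ d + ∑_{i < d} r_i t ^ i` lies
in `I`. No freeness over `R` is assumed, so `r` is not determined by the element of `I`. -/
def leadIdeal (R : Type*) {S : Type*} [Ring R] [Ring S] [Module R S] [IsScalarTower R S S]
    (t : S) (d : ℕ) (I : Ideal S) : Ideal R :=
  (I.restrictScalars R ⊔ lower R t d).comap (LinearMap.toSpanSingleton R S (t ^ d))

theorem mem_leadIdeal {t : S} {d : ℕ} {I : Ideal S} {r : R} :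
    r ∈ leadIdeal R t d I ↔ ∃ u ∈ I, ∃ l ∈ lower R t d, u + l = r • t ^ d := by
  simp [leadIdeal, Submodule.mem_sup]

theorem leadIdeal_mono (t : S) (d : ℕ) {I J : Ideal S} (h : I ≤ J) :
    leadIdeal R t d I ≤ leadIdeal R t d J := by
  intro r hr
  rw [mem_leadIdeal] at hr ⊢
  obtain ⟨u, hu, l⟩ := hr
  exact ⟨u, h hu, l⟩

theorem leadIdeal_mono_deg {t : S}
    (hc : ∀ r : R, ∀ s : S, ∃ r' : R, t * (r • s) = r • (t * s) + r' • s)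
    (I : Ideal S) : Monotone fun d => leadIdeal R t d I := by
  refine monotone_nat_of_le_succ fun d r hr => ?_
  rw [mem_leadIdeal] at hr ⊢
  obtain ⟨u, hu, l, hl, e⟩ := hr
  obtain ⟨r', hr'⟩ := hc r (t ^ d)
  refine ⟨t * u, I.mul_mem_left t hu, t * l - r' • t ^ d,
    sub_mem (mul_mem_lower hc hl) (Submodule.smul_mem _ _ (pow_mem_lower t (Nat.lt_succ_self d))),
    ?_⟩
  rw [pow_succ', ← add_sub_assoc, ← mul_add, e, hr', add_sub_cancel_right]

/-- The ideals of leading coefficients in all degrees detect equality of nested left ideals. -/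
theorem le_of_leadIdeal_le {t : S} (hg : ∀ s : S, ∃ d, s ∈ lower R t d)
    {I J : Ideal S} (hIJ : I ≤ J) (h : ∀ d, leadIdeal R t d J ≤ leadIdeal R t d I) : J ≤ I := by
  have key : ∀ d, ∀ s ∈ J, s ∈ lower R t d → s ∈ I := by
    intro d
    induction d with
    | zero =>
      intro s _ hs
      have : s = 0 := by simpa [lower] using hs
      simp [this]
    | succ d ih =>
      intro s hs hsl
      obtain ⟨r, l, hl, e⟩ := mem_lower_succ hsl
      have hr : r ∈ leadIdeal R t d J :=
        mem_leadIdeal.2 ⟨s, hs, -l, neg_mem hl, by rw [e]; abel⟩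
      obtain ⟨u, hu, l', hl', e'⟩ := mem_leadIdeal.1 (h d hr)
      have h1 : s - u ∈ I := by
        refine ih _ (sub_mem hs (hIJ hu)) ?_
        have : s - u = l' + l := by rw [e, ← e']; abel
        rw [this]
        exact add_mem hl' hl
      simpa using add_mem h1 hu
  intro s hs
  obtain ⟨d, hd⟩ := hg s
  exact key d s hs hd

/-- Hilbert's basis theorem for a ring `S = ∑ R t ^ i` with `[t, R] ⊆ R`. -/
theorem isNoetherianRing_of_commutator [IsNoetherianRing R] (t : S)
    (hc : ∀ r : R, ∀ s : S, ∃ r' : R, t * (r • s) = r • (t * s) + r' • s)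
    (hg : ∀ s : S, ∃ d, s ∈ lower R t d) : IsNoetherianRing S := by
  rw [IsNoetherianRing, ← monotone_stabilizes_iff_noetherian]
  intro f
  have stab := (monotone_stabilizes_iff_noetherian (R := R) (M := R)).2 inferInstance
  have mono2 : ∀ {d d' m m' : ℕ}, d ≤ d' → m ≤ m' →
      leadIdeal R t d (f m) ≤ leadIdeal R t d' (f m') := fun hd hm =>
    (leadIdeal_mono_deg hc _ hd).trans (leadIdeal_mono t _ (f.monotone hm))
  -- the diagonal chain takes care of all large degrees at once
  obtain ⟨N, hN⟩ := stab ⟨fun m => leadIdeal R t m (f m), fun _ _ h => mono2 h h⟩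
  choose K hK using fun d => stab ⟨fun m => leadIdeal R t d (f m), fun _ _ h => mono2 le_rfl h⟩
  change ∀ m, N ≤ m → leadIdeal R t N (f N) = leadIdeal R t m (f m) at hN
  change ∀ d m, K d ≤ m → leadIdeal R t d (f (K d)) = leadIdeal R t d (f m) at hK
  refine ⟨max N ((Finset.range N).sup K), fun m hm => le_antisymm (f.monotone hm) ?_⟩
  refine le_of_leadIdeal_le hg (f.monotone hm) fun d => ?_
  by_cases hd : d < N
  · have hKd : K d ≤ max N ((Finset.range N).sup K) :=
      le_max_of_le_right (Finset.le_sup (Finset.mem_range.2 hd))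
    rw [← hK d m (hKd.trans hm), ← hK d _ hKd]
  · calc leadIdeal R t d (f m) ≤ leadIdeal R t (max d m) (f (max d m)) :=
          mono2 (le_max_left _ _) (le_max_right _ _)
      _ = leadIdeal R t N (f N) := (hN _ (le_max_of_le_left (not_lt.1 hd))).symm
      _ ≤ _ := mono2 (not_lt.1 hd) (le_max_left _ _)

end Hilbert

/-- The Hilbert basis argument for a `k`-algebra `S` generated by `t` and the image of `R`. -/
theorem isNoetherianRing_of_adjoin_eq_top {k R S : Type*} [Field k] [Ring R] [Ring S]
    [Algebra k R] [Algebra k S] [IsNoetherianRing R] (φ : R →ₐ[k] S) (t : S)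
    (hc : ∀ r, ∃ r', t * φ r = φ r * t + φ r') (T : Set S) (hT : Algebra.adjoin k T = ⊤)
    (hTt : ∀ g ∈ T, g = t ∨ ∃ r, φ r = g) : IsNoetherianRing S := by
  let : Module R S := Module.compHom S φ.toRingHom
  have smul_def : ∀ (r : R) (x : S), r • x = φ r * x := fun _ _ => rfl
  have : IsScalarTower R S S := ⟨fun r x y => by
    rw [smul_def, smul_def, smul_eq_mul, smul_eq_mul, mul_assoc]⟩
  have hcomm : ∀ (r : R) (x : S), ∃ r' : R, t * (r • x) = r • (t * x) + r' • x := by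
    intro r x
    obtain ⟨r', hr⟩ := hc r
    exact ⟨r', by rw [smul_def, smul_def, smul_def, ← mul_assoc, hr, add_mul, mul_assoc]⟩
  refine isNoetherianRing_of_commutator (R := R) t hcomm ?_
  -- the union of the filtration is stable under left multiplication and contains `1`
  have key : ∀ u ∈ Algebra.adjoin k T, ∀ d, ∀ x ∈ lower R t d, ∃ d', u * x ∈ lower R t d' := by
    intro u hu
    induction hu using Algebra.adjoin_induction with
    | mem g hg =>
      intro d x hx
      rcases hTt g hg with rfl | ⟨r, rfl⟩
      · exact ⟨d + 1, mul_mem_lower hcomm hx⟩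
      · exact ⟨d, Submodule.smul_mem _ r hx⟩
    | algebraMap c =>
      intro d x hx
      refine ⟨d, ?_⟩
      rw [← φ.commutes c]
      exact Submodule.smul_mem _ (algebraMap k R c) hx
    | add a b _ _ iha ihb =>
      intro d x hx
      obtain ⟨d1, h1⟩ := iha d x hx
      obtain ⟨d2, h2⟩ := ihb d x hx
      refine ⟨max d1 d2, ?_⟩
      rw [add_mul]
      exact add_mem (lower_mono t (le_max_left d1 d2) h1) (lower_mono t (le_max_right d1 d2) h2)
    | mul a b _ _ iha ihb =>
      intro d x hx
      obtain ⟨d1, h1⟩ := ihb d x hx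
      obtain ⟨d2, h2⟩ := iha d1 _ h1
      exact ⟨d2, by rwa [mul_assoc]⟩
  intro u
  obtain ⟨d, hd⟩ := key u (hT ▸ Algebra.mem_top) 1 1
    (by simpa using pow_mem_lower (R := R) t one_pos)
  exact ⟨d, by rwa [mul_one] at hd⟩

/-- Adjoining an element `t` with `[t, s] ⊆ k⟨s⟩` preserves left Noetherianity: `[t, ·]` is a
derivation, so it preserves `k⟨s⟩`. -/
theorem isNoetherianRing_adjoin_insert {k E : Type*} [Field k] [Ring E] [Algebra k E]
    (s : Set E) (t : E) (hs : IsNoetherianRing (Algebra.adjoin k s))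
    (hc : ∀ g ∈ s, t * g - g * t ∈ Algebra.adjoin k s) :
    IsNoetherianRing (Algebra.adjoin k (insert t s)) := by
  have hle : Algebra.adjoin k s ≤ Algebra.adjoin k (insert t s) :=
    Algebra.adjoin_mono (Set.subset_insert t s)
  have hder : ∀ r ∈ Algebra.adjoin k s, t * r - r * t ∈ Algebra.adjoin k s := by
    intro r hr
    induction hr using Algebra.adjoin_induction with
    | mem x hx => exact hc x hx
    | algebraMap c => rw [Algebra.commutes, sub_self]; exact zero_mem _
    | add x y _ _ hx hy =>
      have : t * (x + y) - (x + y) * t = (t * x - x * t) + (t * y - y * t) := by noncomm_ring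
      rw [this]; exact add_mem hx hy
    | mul x y hx' hy' hx hy =>
      have : t * (x * y) - (x * y) * t = (t * x - x * t) * y + x * (t * y - y * t) := by
        noncomm_ring
      rw [this]; exact add_mem (mul_mem hx hy') (mul_mem hx' hy)
  refine isNoetherianRing_of_adjoin_eq_top (Subalgebra.inclusion hle)
    ⟨t, Algebra.subset_adjoin (Set.mem_insert t s)⟩ (fun r => ⟨⟨_, hder r r.2⟩, ?_⟩)
    _ Algebra.adjoin_adjoin_coe_preimage ?_
  · apply Subtype.ext
    change t * (r : E) = (r : E) * t + (t * (r : E) - r * t)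
    abel
  · rintro ⟨g, hg'⟩ hg
    rcases hg with hg | hg
    · exact Or.inl (Subtype.ext hg)
    · exact Or.inr ⟨⟨g, Algebra.subset_adjoin hg⟩, rfl⟩

/-! ### The Weyl algebra is Noetherian -/

variable {k : Type*} [Field k] {n : ℕ} {M : Type*} [AddCommGroup M] [Module k M]

theorem isNoetherianRing_weyl (X D : Fin n → Module.End k M) (hW : IsWeylAction X D) :
    IsNoetherianRing (Algebra.adjoin k (Set.range D ∪ Set.range X)) := by
  classical
  obtain ⟨h1, h2, h3, h4⟩ := hW
  have hX : ∀ s : Finset (Fin n), IsNoetherianRing (Algebra.adjoin k (X '' (s : Set (Fin n)))) := by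
    intro s
    induction s using Finset.induction_on with
    | empty =>
      rw [Finset.coe_empty, Set.image_empty, Algebra.adjoin_empty]
      refine isNoetherianRing_of_surjective k _ (algebraMap k (⊥ : Subalgebra k (Module.End k M))) ?_
      rintro ⟨x, hx⟩
      obtain ⟨c, rfl⟩ := Algebra.mem_bot.1 hx
      exact ⟨c, rfl⟩
    | insert i s _ ih =>
      rw [Finset.coe_insert, Set.image_insert_eq]
      refine isNoetherianRing_adjoin_insert _ _ ih ?_
      rintro _ ⟨j, _, rfl⟩
      rw [h3 i j, sub_self]
      exact zero_mem _
  have hD : ∀ s : Finset (Fin n),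
      IsNoetherianRing (Algebra.adjoin k (D '' (s : Set (Fin n)) ∪ Set.range X)) := by
    intro s
    induction s using Finset.induction_on with
    | empty =>
      have := hX Finset.univ
      rw [Finset.coe_univ, Set.image_univ] at this
      rwa [Finset.coe_empty, Set.image_empty, Set.empty_union]
    | insert i s _ ih =>
      rw [Finset.coe_insert, Set.image_insert_eq, Set.insert_union]
      refine isNoetherianRing_adjoin_insert _ _ ih ?_
      rintro _ (⟨j, _, rfl⟩ | ⟨j, rfl⟩)
      · rw [h4 i j, sub_self]
        exact zero_mem _
      · by_cases hij : i = j
        · subst hij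
          rw [h1 i]
          exact one_mem _
        · rw [h2 i j hij, sub_self]
          exact zero_mem _
  have := hD Finset.univ
  rwa [Finset.coe_univ, Set.image_univ] at this

/-! ### Subspaces of a weight space are cut out by the submodules they generate -/

/-- One pair of operators with `d x - x d = 1`: a subspace `V` of an eigenspace of `x d` is
recovered by intersecting the invariant subspace it generates with that eigenspace. -/
theorem exists_invariant_inf_le_one [CharZero k] (x d : Module.End k M) (h : d * x - x * d = 1)
    (a : k) (V : Submodule k M) (hV : V ≤ Module.End.eigenspace (x * d) a) :
    ∃ W : Submodule k M, V ≤ W ∧ (∀ m ∈ W, x m ∈ W ∧ d m ∈ W) ∧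
      W ⊓ Module.End.eigenspace (x * d) a ≤ V ∧
      ∀ W' : Submodule k M, V ≤ W' → (∀ m ∈ W', x m ∈ W' ∧ d m ∈ W') → W ≤ W' := by
  have hdx : ∀ y, d (x y) = x (d y) + y := fun y => by
    have := LinearMap.congr_fun h y
    simp only [LinearMap.sub_apply, Module.End.mul_apply, Module.End.one_apply] at this
    rw [add_comm]
    exact sub_eq_iff_eq_add.1 this
  have hVx : ∀ v ∈ V, ∀ m : ℕ, x (d ((x ^ m) v)) = (a + m) • (x ^ m) v := by
    intro v hv m
    induction m with
    | zero => simpa using Module.End.mem_eigenspace_iff.1 (hV hv)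
    | succ m ih =>
      rw [pow_succ', Module.End.mul_apply, hdx, map_add, ih, map_smul]
      push_cast
      module
  have hVd : ∀ v ∈ V, ∀ m : ℕ, x (d ((d ^ m) v)) = (a - m) • (d ^ m) v := by
    intro v hv m
    induction m with
    | zero => simpa using Module.End.mem_eigenspace_iff.1 (hV hv)
    | succ m ih =>
      rw [pow_succ', Module.End.mul_apply]
      have h1 := hdx (d ((d ^ m) v))
      rw [ih, map_smul] at h1
      rw [← sub_eq_iff_eq_add] at h1
      rw [← h1]
      push_cast
      module
  let W : Submodule k M := ⨆ m : ℕ, (V.map (x ^ m) ⊔ V.map (d ^ m))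
  have hxm : ∀ v ∈ V, ∀ m : ℕ, (x ^ m) v ∈ W := fun v hv m =>
    Submodule.mem_iSup_of_mem m (Submodule.mem_sup_left (Submodule.mem_map_of_mem hv))
  have hdm : ∀ v ∈ V, ∀ m : ℕ, (d ^ m) v ∈ W := fun v hv m =>
    Submodule.mem_iSup_of_mem m (Submodule.mem_sup_right (Submodule.mem_map_of_mem hv))
  have hWle : ∀ P : Submodule k M, (∀ v ∈ V, ∀ m : ℕ, (x ^ m) v ∈ P ∧ (d ^ m) v ∈ P) → W ≤ P := by
    intro P hP
    refine iSup_le fun m => sup_le ?_ ?_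
    · rintro _ ⟨v, hv, rfl⟩
      exact (hP v hv m).1
    · rintro _ ⟨v, hv, rfl⟩
      exact (hP v hv m).2
  refine ⟨W, fun v hv => by simpa using hxm v hv 0, ?_, ?_, ?_⟩
  · have hx : W ≤ W.comap x := hWle _ fun v hv m => by
      simp only [Submodule.mem_comap]
      refine ⟨by simpa [pow_succ'] using hxm v hv (m + 1), ?_⟩
      cases m with
      | zero => simpa using hxm v hv 1
      | succ m =>
        rw [pow_succ', Module.End.mul_apply, hVd v hv m]
        exact W.smul_mem _ (hdm v hv m)
    have hd : W ≤ W.comap d := hWle _ fun v hv m => by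
      simp only [Submodule.mem_comap]
      refine ⟨?_, by simpa [pow_succ'] using hdm v hv (m + 1)⟩
      cases m with
      | zero => simpa using hdm v hv 1
      | succ m =>
        rw [pow_succ', Module.End.mul_apply, hdx, hVx v hv m]
        exact add_mem (W.smul_mem _ (hxm v hv m)) (hxm v hv m)
    exact fun m hm => ⟨hx hm, hd hm⟩
  · let Q : Submodule k M := ⨆ (b : k) (_ : b ≠ a), Module.End.eigenspace (x * d) b
    have hQ : ∀ b, b ≠ a → Module.End.eigenspace (x * d) b ≤ Q := fun b hb =>
      le_iSup₂_of_le b hb le_rfl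
    have hWQ : W ≤ V ⊔ Q := hWle _ fun v hv m => by
      rcases Nat.eq_zero_or_pos m with rfl | hm
      · simpa using Submodule.mem_sup_left hv
      · have hm' : (m : k) ≠ 0 := by exact_mod_cast hm.ne'
        exact ⟨Submodule.mem_sup_right (hQ (a + m) (by simpa using hm')
            (Module.End.mem_eigenspace_iff.2 (hVx v hv m))),
          Submodule.mem_sup_right (hQ (a - m) (by simpa using hm')
            (Module.End.mem_eigenspace_iff.2 (hVd v hv m)))⟩
    rintro y ⟨hyW, hya⟩
    obtain ⟨v, hv, q, hq, rfl⟩ := Submodule.mem_sup.1 (hWQ hyW)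
    have hqa : q ∈ Module.End.eigenspace (x * d) a := by
      simpa using sub_mem hya (hV hv)
    have hq0 : q = 0 :=
      Submodule.disjoint_def.1 (Module.End.eigenspaces_iSupIndep (x * d) a) q hqa hq
    simpa [hq0] using hv
  · intro W' hVW' hinv
    refine hWle _ fun v hv m => ?_
    induction m with
    | zero => simpa using hVW' hv
    | succ m ih =>
      simp only [pow_succ', Module.End.mul_apply]
      exact ⟨(hinv _ ih.1).1, (hinv _ ih.2).2⟩

/-- Subspaces of the joint eigenspace for the indices in `s` are recovered from the subspaces they
generate under `X i`, `D i` (`i ∈ s`). The minimality clause drives the induction on `s`. -/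
theorem exists_invariant_inf_le [CharZero k] (X D : Fin n → Module.End k M)
    (hW : IsWeylAction X D) (a : Fin n → k) (s : Finset (Fin n)) (V : Submodule k M)
    (hV : ∀ i, V ≤ Module.End.eigenspace (X i * D i) (a i)) :
    ∃ W : Submodule k M, V ≤ W ∧ (∀ i ∈ s, ∀ m ∈ W, X i m ∈ W ∧ D i m ∈ W) ∧
      (∀ y ∈ W, (∀ i ∈ s, y ∈ Module.End.eigenspace (X i * D i) (a i)) → y ∈ V) ∧
      ∀ W' : Submodule k M, V ≤ W' → (∀ i ∈ s, ∀ m ∈ W', X i m ∈ W' ∧ D i m ∈ W') → W ≤ W' := by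
  classical
  obtain ⟨h1, h2, h3, h4⟩ := hW
  have cXX : ∀ i j y, X i (X j y) = X j (X i y) := fun i j y => LinearMap.congr_fun (h3 i j) y
  have cDD : ∀ i j y, D i (D j y) = D j (D i y) := fun i j y => LinearMap.congr_fun (h4 i j) y
  have cDX : ∀ i j y, i ≠ j → D i (X j y) = X j (D i y) := fun i j y h =>
    LinearMap.congr_fun (h2 i j h) y
  induction s using Finset.induction_on with
  | empty => exact ⟨V, le_rfl, by simp, by simp, fun W' h _ => h⟩
  | insert i s hi ih =>
    obtain ⟨W0, hVW0, hinv0, hint0, hmin0⟩ := ih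
    have hne : ∀ j ∈ s, i ≠ j := fun j hj h => hi (h ▸ hj)
    have hW0 : W0 ≤ Module.End.eigenspace (X i * D i) (a i) := by
      refine hmin0 _ (hV i) fun j hj m hm => ?_
      simp only [Module.End.mem_eigenspace_iff, Module.End.mul_apply] at hm ⊢
      rw [cDX i j m (hne j hj), cXX i j, hm, cDD i j, ← cDX j i _ (hne j hj).symm, hm]
      simp
    obtain ⟨W, hW0W, hinv, hint, hmin⟩ :=
      exists_invariant_inf_le_one (X i) (D i) (h1 i) (a i) W0 hW0
    refine ⟨W, hVW0.trans hW0W, ?_, ?_, ?_⟩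
    · intro j hj m hm
      rcases Finset.mem_insert.1 hj with rfl | hj
      · exact hinv m hm
      · have : W ≤ W ⊓ W.comap (X j) ⊓ W.comap (D j) := by
          refine hmin _ (fun y hy => ⟨⟨hW0W hy, hW0W (hinv0 j hj y hy).1⟩,
            hW0W (hinv0 j hj y hy).2⟩) ?_
          rintro y ⟨⟨hy1, hy2⟩, hy3⟩
          simp only [SetLike.mem_coe, Submodule.mem_comap] at hy1 hy2 hy3
          simp only [Submodule.mem_inf, Submodule.mem_comap]
          rw [cXX j i, cDX j i _ (hne j hj).symm, ← cDX i j _ (hne j hj), cDD j i]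
          exact ⟨⟨⟨(hinv _ hy1).1, (hinv _ hy2).1⟩, (hinv _ hy3).1⟩,
            ⟨⟨(hinv _ hy1).2, (hinv _ hy2).2⟩, (hinv _ hy3).2⟩⟩
        exact ⟨(this hm).1.2, (this hm).2⟩
    · intro y hy hya
      exact hint0 y (hint ⟨hy, hya i (Finset.mem_insert_self i s)⟩)
        fun j hj => hya j (Finset.mem_insert_of_mem hj)
    · intro W' hVW' hinv'
      exact hmin W' (hmin0 W' hVW' fun j hj => hinv' j (Finset.mem_insert_of_mem hj))
        (hinv' i (Finset.mem_insert_self i s))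

theorem adjoin_apply_mem (X D : Fin n → Module.End k M) (W : Submodule k M)
    (hinv : ∀ i : Fin n, ∀ m ∈ W, X i m ∈ W ∧ D i m ∈ W) {u : Module.End k M}
    (hu : u ∈ Algebra.adjoin k (Set.range D ∪ Set.range X)) : ∀ m ∈ W, u m ∈ W := by
  induction hu using Algebra.adjoin_induction with
  | mem g hg =>
    rcases hg with ⟨i, rfl⟩ | ⟨i, rfl⟩
    · exact fun m hm => (hinv i m hm).2
    · exact fun m hm => (hinv i m hm).1
  | algebraMap c => exact fun m hm => by simpa using W.smul_mem c hm
  | add x y _ _ hx hy => exact fun m hm => add_mem (hx m hm) (hy m hm)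
  | mul x y _ _ hx hy => exact fun m hm => hx _ (hy m hm)

end WeylWeight

/-- for a finitely generated left module `M` over the Weyl algebra
`A = k⟨x_1,…,x_n,∂_1,…,∂_n⟩` (`char k = 0`), each simultaneous eigenspace
`M_a = {y : (xᵢ∂ᵢ)y = aᵢy for all i}` (`a ∈ ℤⁿ`) is finite-dimensional over `k`. -/
theorem weyl_weight_spaces_finiteDimensional {k : Type*} [Field k] [CharZero k]
    {n : ℕ} {M : Type*} [AddCommGroup M] [Module k M]
    (X D : Fin n → Module.End k M) (hW : IsWeylAction X D)
    (hFG : IsFGWeylModule X D) (a : Fin n → ℤ) :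
    FiniteDimensional k (weylWeightSpace X D a) := by
  have := WeylWeight.isNoetherianRing_weyl X D hW
  set A := Algebra.adjoin k (Set.range D ∪ Set.range X) with hA
  have hXA : ∀ i, X i ∈ A := fun i => Algebra.subset_adjoin (Or.inr ⟨i, rfl⟩)
  have hDA : ∀ i, D i ∈ A := fun i => Algebra.subset_adjoin (Or.inl ⟨i, rfl⟩)
  have : Module.Finite A M := by
    obtain ⟨s, hs⟩ := hFG
    refine ⟨⟨s, ?_⟩⟩
    have htop := hs ((Submodule.span A (s : Set M)).restrictScalars k) Submodule.subset_span
      fun i m hm => ⟨Submodule.smul_mem _ (⟨X i, hXA i⟩ : A) hm,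
        Submodule.smul_mem _ (⟨D i, hDA i⟩ : A) hm⟩
    exact (Submodule.restrictScalars_eq_top_iff k A M).1 htop
  have : IsNoetherian A M := isNoetherian_of_isNoetherianRing_of_finite A M
  let f : Submodule k (weylWeightSpace X D a) → Submodule A M := fun V =>
    Submodule.span A (V.map (weylWeightSpace X D a).subtype : Set M)
  have hf : Monotone f := fun V V' h => Submodule.span_mono (Submodule.map_mono h)
  -- `V` is recovered from the `A`-submodule it generates
  have hrec : ∀ (V : Submodule k (weylWeightSpace X D a)) (y : weylWeightSpace X D a),
      (y : M) ∈ f V → y ∈ V := by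
    intro V y hy
    have hle : ∀ i, weylWeightSpace X D a ≤ Module.End.eigenspace (X i * D i) ((a i : ℤ) : k) :=
      fun i => iInf_le _ i
    obtain ⟨W, hVW, hinv, hint, -⟩ := WeylWeight.exists_invariant_inf_le X D hW
      (fun i => ((a i : ℤ) : k)) Finset.univ (V.map (weylWeightSpace X D a).subtype)
      fun i => (Submodule.map_subtype_le _ _).trans (hle i)
    let W' : Submodule A M :=
      { W.toAddSubmonoid with
        smul_mem' := fun u m hm => WeylWeight.adjoin_apply_mem X D W
          (fun i => hinv i (Finset.mem_univ i)) u.2 m hm }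
    have hyW : (y : M) ∈ W' := (Submodule.span_le (p := W')).2 hVW hy
    obtain ⟨z, hz, e⟩ := hint y hyW fun i _ => hle i y.2
    rwa [← Subtype.ext e]
  have hinj : Function.Injective f := fun V V' h => le_antisymm
    (fun y hy => hrec V' y (h ▸ Submodule.subset_span ⟨y, hy, rfl⟩))
    (fun y hy => hrec V y (h ▸ Submodule.subset_span ⟨y, hy, rfl⟩))
  have : WellFoundedGT (Submodule k (weylWeightSpace X D a)) :=
    (hf.strictMono_of_injective hinj).wellFoundedGT
  have : IsNoetherian k (weylWeightSpace X D a) := isNoetherian_iff'.2 this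
  infer_instance
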